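/- arXiv:0811.1190 — 4 statements merged into one kernel-verified Lean document; each statement's English description precedes it below -/
import Mathlib

section
/- Let T > 0 and let p : ℝ → ℝ be continuous and strictly increasing on [0,∞) with p(0) = 0 and p(x) > 0 for x > 0. Let P : [0,∞) → [0,∞) be the inverse of x ↦ x + p(x), i.e. P(x) ≥ 0 and P(x) + p(P(x)) = x for all x ≥ 0, and define q(x) = x − P(x). Suppose E : [0,∞) → [0,∞) is nonincreasing and satisfies E((m+1)T) + p(E((m+1)T)) ≤ E(mT) for every natural number m. Let S : [0,∞) → [0,∞) be differentiable with S'(t) = −q(S(t)) for all t ≥ 0 and S(0) = E(0). Then E(t) ≤ S(t/T − 1) for every t > T. -/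
/-!
The inequality is checked first at the multiples of `T`: `E (m T) ≤ S m`, by induction on `m`.
The dissipation inequality says `E ((m+1) T) ≤ P (E (m T))`, and `P` is monotone because
`x ↦ x + p x` is strictly increasing, so `E ((m+1) T) ≤ P (S m)`. On the other side
`q = p ∘ P` is nonnegative and nondecreasing on `[0, ∞)`; hence `S` is nonincreasing, its slope
on `[m, m+1]` is at least `-q (S m)`, and `S (m+1) ≥ S m - q (S m) = P (S m)`.
For general `t > T`, take `m = ⌊t / T⌋`: then `E t ≤ E (m T) ≤ S m ≤ S (t / T - 1)`, as both
functions are nonincreasing and `t / T - 1 ≤ m ≤ t / T`.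
-/

open Set

/-- Abstract ODE-comparison core of Theorem 3.1 (Lasiecka–Tataru):
a discrete dissipation inequality along multiples of `T` yields
`E t ≤ S (t/T - 1)` for `t > T`, where `S` solves `S' + q(S) = 0`, `S 0 = E 0`. -/
theorem stmt_0 (T : ℝ) (hT : 0 < T)
    (p P q : ℝ → ℝ)
    (hpc : ContinuousOn p (Ici 0))
    (hpm : StrictMonoOn p (Ici 0))
    (hp0 : p 0 = 0)
    (hppos : ∀ x > (0 : ℝ), 0 < p x)
    (hPnn : ∀ x ≥ (0 : ℝ), 0 ≤ P x)
    (hPinv : ∀ x ≥ (0 : ℝ), P x + p (P x) = x)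
    (hq : ∀ x, q x = x - P x)
    (E : ℝ → ℝ)
    (hEnn : ∀ t ≥ (0 : ℝ), 0 ≤ E t)
    (hEmono : AntitoneOn E (Ici 0))
    (hErec : ∀ m : ℕ, E (((m : ℝ) + 1) * T) + p (E (((m : ℝ) + 1) * T)) ≤ E ((m : ℝ) * T))
    (S : ℝ → ℝ)
    (hSnn : ∀ t ≥ (0 : ℝ), 0 ≤ S t)
    (hS' : ∀ t ≥ (0 : ℝ), HasDerivWithinAt S (-(q (S t))) (Ici 0) t)
    (hS0 : S 0 = E 0) :
    ∀ t > T, E t ≤ S (t / T - 1) := by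
  have hPle : ∀ x ≥ (0 : ℝ), ∀ y ≥ (0 : ℝ), y + p y ≤ x → y ≤ P x := by
    intro x hx y hy hxy
    by_contra! h
    have h1 := hpm (hPnn x hx) hy h
    have h2 := hPinv x hx
    linarith
  have hPmono : ∀ x ≥ (0 : ℝ), ∀ y ≥ x, P x ≤ P y := fun x hx y hxy =>
    hPle y (le_trans hx hxy) (P x) (hPnn x hx) ((hPinv x hx).trans_le hxy)
  have hqp : ∀ x ≥ (0 : ℝ), q x = p (P x) := by
    intro x hx
    have h1 := hq x
    have h2 := hPinv x hx
    linarith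
  have hqnn : ∀ x ≥ (0 : ℝ), 0 ≤ q x := by
    intro x hx
    rw [hqp x hx, ← hp0]
    exact hpm.monotoneOn self_mem_Ici (hPnn x hx) (hPnn x hx)
  have hqmono : ∀ x ≥ (0 : ℝ), ∀ y ≥ x, q x ≤ q y := by
    intro x hx y hxy
    have hy : 0 ≤ y := le_trans hx hxy
    rw [hqp x hx, hqp y hy]
    exact hpm.monotoneOn (hPnn x hx) (hPnn y hy) (hPmono x hx y hxy)
  have hSc : ContinuousOn S (Ici 0) := fun t ht => (hS' t ht).continuousWithinAt
  have hSd : ∀ t > (0 : ℝ), HasDerivAt S (-(q (S t))) t := fun t ht =>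
    (hS' t ht.le).hasDerivAt (Ici_mem_nhds ht)
  have hSanti : AntitoneOn S (Ici 0) := by
    refine antitoneOn_of_deriv_nonpos (convex_Ici 0) hSc ?_ ?_
    · intro t ht
      rw [interior_Ici] at ht
      exact (hSd t ht).differentiableAt.differentiableWithinAt
    · intro t ht
      rw [interior_Ici] at ht
      rw [(hSd t ht).deriv]
      exact neg_nonpos.mpr (hqnn _ (hSnn t (le_of_lt ht)))
  have hSstep : ∀ a ≥ (0 : ℝ), P (S a) ≤ S (a + 1) := by
    intro a ha
    have hslope := (convex_Icc a (a + 1)).mul_sub_le_image_sub_of_le_deriv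
      (f := S) (C := -(q (S a)))
      (hSc.mono fun t ht => le_trans ha ht.1)
      (by
        intro t ht
        rw [interior_Icc] at ht
        exact (hSd t (lt_of_le_of_lt ha ht.1)).differentiableAt.differentiableWithinAt)
      (by
        intro t ht
        rw [interior_Icc] at ht
        have ht0 : 0 < t := lt_of_le_of_lt ha ht.1
        rw [(hSd t ht0).deriv]
        exact neg_le_neg (hqmono _ (hSnn t ht0.le) _ (hSanti ha ht0.le ht.1.le)))
      a (left_mem_Icc.mpr (by linarith)) (a + 1) (right_mem_Icc.mpr (by linarith)) (by linarith)
    have h2 := hq (S a)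
    linarith
  have hdisc : ∀ m : ℕ, E ((m : ℝ) * T) ≤ S m := by
    intro m
    induction m with
    | zero => simp [hS0]
    | succ m ih =>
      push_cast
      have hm : (0 : ℝ) ≤ (m : ℝ) * T := by positivity
      have hm1 : (0 : ℝ) ≤ ((m : ℝ) + 1) * T := by positivity
      calc E (((m : ℝ) + 1) * T) ≤ P (E ((m : ℝ) * T)) :=
            hPle _ (hEnn _ hm) _ (hEnn _ hm1) (hErec m)
        _ ≤ P (S m) := hPmono _ (hEnn _ hm) _ ih
        _ ≤ S ((m : ℝ) + 1) := hSstep m (Nat.cast_nonneg m)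
  intro t ht
  have ht0 : 0 < t := hT.trans ht
  have hs : 1 < t / T := (one_lt_div hT).mpr ht
  have hfl : (⌊t / T⌋₊ : ℝ) ≤ t / T := Nat.floor_le (by linarith)
  have hfl' : t / T < ⌊t / T⌋₊ + 1 := Nat.lt_floor_add_one _
  calc E t ≤ E ((⌊t / T⌋₊ : ℝ) * T) :=
        hEmono (mem_Ici.mpr (by positivity)) ht0.le ((le_div_iff₀ hT).mp hfl)
    _ ≤ S ⌊t / T⌋₊ := hdisc _
    _ ≤ S (t / T - 1) :=
        hSanti (mem_Ici.mpr (by linarith)) (mem_Ici.mpr (Nat.cast_nonneg _)) (by linarith)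
end

section
/- Let p : ℝ → ℝ be continuous and strictly increasing on [0,∞) with p(0) = 0. Let P : [0,∞) → [0,∞) be the inverse of x ↦ x + p(x), i.e. P(x) ≥ 0 and P(x) + p(P(x)) = x for all x ≥ 0, and define q(x) = x − P(x). Let s : ℕ → [0,∞) be a sequence satisfying s(m+1) + p(s(m+1)) ≤ s(m) for all m, and let S : [0,∞) → [0,∞) be differentiable with S'(t) = −q(S(t)) for all t ≥ 0 and S(0) = s(0). Then s(m) ≤ S(m) for every natural number m. -/
/-!
Since `q = p ∘ P` on `[0, ∞)` and both `p` and `P` are increasing, `q` is nonnegative and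
increasing there, so `S` is decreasing. The mean value theorem on `[m, m + 1]` then gives
`S (m + 1) = S m - q (S c) ≥ S m - q (S m) = P (S m)`. If `s m ≤ S m`, the recursion reads
`(I + p) (s (m + 1)) ≤ S m`, hence `s (m + 1) ≤ P (S m) ≤ S (m + 1)`, and induction concludes.
-/

open Set

/-- Lemma B (Lasiecka–Tataru), first assertion: a nonnegative sequence with
`s (m+1) + p (s (m+1)) ≤ s m` is dominated at integer times by the solution of
`S' + q(S) = 0`, `S 0 = s 0`, where `q x = x - (I + p)⁻¹ x`. -/
theorem stmt_1 (p P q : ℝ → ℝ)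
    (hpc : ContinuousOn p (Ici 0))
    (hpm : StrictMonoOn p (Ici 0))
    (hp0 : p 0 = 0)
    (hPnn : ∀ x ≥ (0 : ℝ), 0 ≤ P x)
    (hPinv : ∀ x ≥ (0 : ℝ), P x + p (P x) = x)
    (hq : ∀ x, q x = x - P x)
    (s : ℕ → ℝ)
    (hsnn : ∀ m, 0 ≤ s m)
    (hrec : ∀ m, s (m + 1) + p (s (m + 1)) ≤ s m)
    (S : ℝ → ℝ)
    (hSnn : ∀ t ≥ (0 : ℝ), 0 ≤ S t)
    (hS' : ∀ t ≥ (0 : ℝ), HasDerivWithinAt S (-(q (S t))) (Ici 0) t)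
    (hS0 : S 0 = s 0) :
    ∀ m : ℕ, s m ≤ S m := by
  have hP_ge : ∀ a ≥ (0 : ℝ), ∀ x ≥ (0 : ℝ), a + p a ≤ x → a ≤ P x := by
    intro a ha x hx h
    by_contra! hlt
    have := hpm (hPnn x hx) ha hlt
    linarith [hPinv x hx]
  have hq_eq : ∀ x ≥ (0 : ℝ), q x = p (P x) := fun x hx => by
    linarith [hq x, hPinv x hx]
  have hq_nn : ∀ x ≥ (0 : ℝ), 0 ≤ q x := by
    intro x hx
    rw [hq_eq x hx, ← hp0]
    exact hpm.monotoneOn self_mem_Ici (hPnn x hx) (hPnn x hx)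
  have hq_mono : ∀ x ≥ (0 : ℝ), ∀ y ≥ (0 : ℝ), x ≤ y → q x ≤ q y := by
    intro x hx y hy hxy
    rw [hq_eq x hx, hq_eq y hy]
    exact hpm.monotoneOn (hPnn x hx) (hPnn y hy)
      (hP_ge _ (hPnn x hx) y hy ((hPinv x hx).le.trans hxy))
  have hS_cont : ContinuousOn S (Ici 0) := fun t ht => (hS' t ht).continuousWithinAt
  have hS_deriv : ∀ t > (0 : ℝ), HasDerivAt S (-(q (S t))) t := fun t ht =>
    (hS' t ht.le).hasDerivAt (Ici_mem_nhds ht)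
  have hS_anti : AntitoneOn S (Ici 0) := by
    refine antitoneOn_of_deriv_nonpos (convex_Ici 0) hS_cont ?_ ?_
    · intro t ht
      rw [interior_Ici] at ht
      exact (hS_deriv t ht).differentiableAt.differentiableWithinAt
    · intro t ht
      rw [interior_Ici] at ht
      rw [(hS_deriv t ht).deriv]
      linarith [hq_nn _ (hSnn t (le_of_lt ht))]
  intro m
  induction m with
  | zero => simp [hS0]
  | succ m ih =>
    have hm : (0 : ℝ) ≤ m := m.cast_nonneg
    obtain ⟨c, hc, hceq⟩ := exists_hasDerivAt_eq_slope S (fun t => -(q (S t)))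
      (lt_add_one (m : ℝ)) (hS_cont.mono fun t ht => hm.trans ht.1)
      (fun t ht => hS_deriv t (hm.trans_lt ht.1))
    have hc0 : 0 ≤ c := hm.trans hc.1.le
    have hqc := hq_mono _ (hSnn c hc0) _ (hSnn m hm) (hS_anti hm hc0 hc.1.le)
    have hstep := hP_ge _ (hsnn (m + 1)) _ (hSnn m hm) ((hrec m).trans ih)
    rw [add_sub_cancel_left, div_one] at hceq
    push_cast
    linarith [hq (S m)]
end

section
/- Let p : ℝ → ℝ be continuous and strictly increasing on [0,∞) with p(0) = 0 and p(x) > 0 for every x > 0. Let P : [0,∞) → [0,∞) be the inverse of x ↦ x + p(x), i.e. P(x) ≥ 0 and P(x) + p(P(x)) = x for all x ≥ 0, and define q(x) = x − P(x). If S : [0,∞) → [0,∞) is continuously differentiable and satisfies S'(t) = −q(S(t)) for all t ≥ 0, then S(t) → 0 as t → ∞. -/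
/-!
On `[0, ∞)` the function `q` equals `p ∘ P`, and `P` is monotone because `x + p x` is strictly
increasing; hence `q` is monotone, nonnegative, and positive on `(0, ∞)`. A solution `S` is therefore
nonincreasing. If it stayed above some `ε > 0`, then `S' ≤ -q ε < 0` throughout, so by the mean value
inequality `S` would lie below a line of negative slope and eventually become negative. Thus `S` drops
below every `ε > 0` and, being nonincreasing, stays there.
-/

open Set Filter

/-- Lemma B (Lasiecka–Tataru), second assertion: if `p x > 0` for `x > 0`, any
nonnegative C¹ solution of `S' + q(S) = 0`, with `q x = x - (I + p)⁻¹ x`,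
tends to zero at infinity. -/
theorem stmt_2 (p P q : ℝ → ℝ)
    (hpc : ContinuousOn p (Ici 0))
    (hpm : StrictMonoOn p (Ici 0))
    (hp0 : p 0 = 0)
    (hppos : ∀ x > (0 : ℝ), 0 < p x)
    (hPnn : ∀ x ≥ (0 : ℝ), 0 ≤ P x)
    (hPinv : ∀ x ≥ (0 : ℝ), P x + p (P x) = x)
    (hq : ∀ x, q x = x - P x)
    (S : ℝ → ℝ)
    (hSnn : ∀ t ≥ (0 : ℝ), 0 ≤ S t)
    (hSC1 : ContDiffOn ℝ 1 S (Ici 0))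
    (hS' : ∀ t ≥ (0 : ℝ), HasDerivWithinAt S (-(q (S t))) (Ici 0) t) :
    Tendsto S atTop (nhds 0) := by
  have hqP : ∀ x ≥ (0 : ℝ), q x = p (P x) := by
    intro x hx
    have := hPinv x hx
    rw [hq]
    linarith
  have hqmono : ∀ x y : ℝ, 0 ≤ x → x ≤ y → q x ≤ q y := by
    intro x y hx hxy
    have hy : 0 ≤ y := hx.trans hxy
    have hP : P x ≤ P y := by
      by_contra! h
      have h1 := hpm (hPnn y hy) (hPnn x hx) h
      have h2 := hPinv x hx
      have h3 := hPinv y hy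
      linarith
    rw [hqP x hx, hqP y hy]
    exact hpm.monotoneOn (hPnn x hx) (hPnn y hy) hP
  have hqpos : ∀ x : ℝ, 0 < x → 0 < q x := by
    intro x hx
    rw [hqP x hx.le]
    refine hppos _ (lt_of_le_of_ne (hPnn x hx.le) fun h => ?_)
    have h1 := hPinv x hx.le
    rw [← h, hp0] at h1
    linarith
  have hqnn : ∀ x : ℝ, 0 ≤ x → 0 ≤ q x := by
    intro x hx
    rw [hqP x hx, ← hp0]
    exact hpm.monotoneOn self_mem_Ici (hPnn x hx) (hPnn x hx)
  have hder : ∀ t ∈ interior (Ici (0 : ℝ)), HasDerivAt S (-(q (S t))) t := by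
    intro t ht
    rw [interior_Ici] at ht
    exact (hS' t (le_of_lt ht)).hasDerivAt (Ici_mem_nhds ht)
  -- Mean value inequality: a lower bound `c` on `q ∘ S` gives decay at rate at least `c`.
  have hmv : ∀ c : ℝ, (∀ t ≥ (0 : ℝ), c ≤ q (S t)) →
      ∀ a b : ℝ, 0 ≤ a → a ≤ b → S b - S a ≤ -c * (b - a) := by
    intro c hc a b ha hab
    refine (convex_Ici (0 : ℝ)).image_sub_le_mul_sub_of_deriv_le hSC1.continuousOn
      (fun t ht => (hder t ht).differentiableAt.differentiableWithinAt) ?_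
      a ha b (ha.trans hab) hab
    intro t ht
    rw [(hder t ht).deriv]
    linarith [hc t (interior_subset ht)]
  rw [Metric.tendsto_atTop]
  intro ε hε
  obtain ⟨T, hT, hST⟩ : ∃ T ≥ (0 : ℝ), S T < ε := by
    by_contra! h
    have hc := hqpos ε hε
    have h0 := hSnn 0 le_rfl
    -- At this time the line `S 0 - q ε * t` has the negative value `-q ε`.
    have hb : 0 ≤ S 0 / q ε + 1 := by positivity
    have h1 := hmv (q ε) (fun t ht => hqmono _ _ hε.le (h t ht)) 0 (S 0 / q ε + 1) le_rfl hb
    have h2 : -q ε * (S 0 / q ε + 1 - 0) = -S 0 - q ε := by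
      field_simp
      ring
    have h3 := hSnn _ hb
    linarith
  refine ⟨T, fun t ht => ?_⟩
  have h1 := hmv 0 (fun t ht => hqnn _ (hSnn t ht)) T t hT ht
  have h2 := hSnn t (hT.trans ht)
  rw [Real.dist_eq, sub_zero, abs_of_nonneg h2]
  linarith
end

section
/- Let (Σ, μ) be a measure space with 0 < μ(Σ) < ∞. Let A ≥ 0 and let a : Σ → ℝ be measurable with 0 ≤ a(x) ≤ A for a.e. x. Let k, K > 0 and let g : ℝ → ℝ satisfy s·g(s) ≥ 0 for all s and k|s| ≤ |g(s)| ≤ K|s| for |s| ≥ 1. Let h : [0,∞) → [0,∞) be concave and monotone increasing with h(0) = 0 and h(s·g(s)) ≥ s² + g(s)² for all |s| ≤ 1. Let v : Σ → ℝ be measurable and assume that x ↦ a(x)·(g(v(x))² + v(x)²) and x ↦ a(x)·g(v(x))·v(x) are integrable. Then ∫_Σ a·(g(v)² + v²) dμ ≤ (k^{-1} + K)·∫_Σ a·g(v)·v dμ + (1 + A)·μ(Σ)·h( (1/μ(Σ))·∫_Σ a·g(v)·v dμ ). -/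
open MeasureTheory Set

/-!
Put `w = a · g(v) · v ≥ 0`. Almost everywhere
`a (g(v)² + v²) ≤ (k⁻¹ + K) w + (1 + A) h(w)`:
for `|v| ≥ 1` the growth bounds give the first term (`growth_bound`), and for `|v| ≤ 1` the
majorant gives `a h(g(v) v)`, which concavity and `h 0 = 0` bound by `(1 + A) h(w)`
(`mul_concave_le`).

The function `h` may jump at `0` and `h ∘ w` is not assumed integrable, so instead of a ready-made
Jensen inequality, `h` is replaced by a supporting line at the mean `m` of `w` when `m > 0`
(`exists_supporting_line`) and the resulting affine bound in `w` is integrated. When `m = 0`,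
`w` vanishes almost everywhere and the pointwise bound suffices.
-/

lemma exists_supporting_line {h : ℝ → ℝ} (hconc : ConcaveOn ℝ (Ici 0) h) {m : ℝ} (hm : 0 < m) :
    ∃ c : ℝ, ∀ y, 0 ≤ y → h y ≤ h m + c * (y - m) := by
  have hcv := hconc.neg
  have hmi : m ∈ interior (Ici (0 : ℝ)) := by simpa using hm
  refine ⟨-derivWithin (-h) (Ioi m) m, fun y hy => ?_⟩
  rcases lt_trichotomy y m with hlt | rfl | hlt
  · have h1 := (hcv.slope_le_leftDeriv_of_mem_interior (mem_Ici.2 hy) hmi hlt).trans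
      (hcv.leftDeriv_le_rightDeriv_of_mem_interior hmi)
    rw [slope_def_field, div_le_iff₀ (by linarith)] at h1
    simp only [Pi.neg_apply] at h1
    linarith
  · simp
  · have h1 := hcv.rightDeriv_le_slope_of_mem_interior hmi (mem_Ici.2 hy) hlt
    rw [slope_def_field, le_div_iff₀ (by linarith)] at h1
    simp only [Pi.neg_apply] at h1
    linarith

lemma growth_bound {k K s t : ℝ} (hk : 0 < k) (hst : 0 ≤ s * t)
    (hlow : k * |s| ≤ |t|) (hup : |t| ≤ K * |s|) :
    t ^ 2 + s ^ 2 ≤ (k⁻¹ + K) * (t * s) := by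
  have e : t * s = |t| * |s| := by rw [← abs_mul, abs_of_nonneg (by linarith)]
  have h1 : |s| ≤ k⁻¹ * |t| := by rwa [inv_mul_eq_div, le_div_iff₀ hk, mul_comm]
  rw [e, ← sq_abs t, ← sq_abs s]
  nlinarith [mul_le_mul_of_nonneg_right h1 (abs_nonneg s),
    mul_le_mul_of_nonneg_right hup (abs_nonneg t)]

/-- A concave function vanishing at `0` satisfies `θ h(y) ≤ h(θ y)` for `θ ∈ [0, 1]`; here
`θ = b / (1 + A)`, and monotonicity removes the factor `1 / (1 + A)` from the argument. -/
lemma mul_concave_le {h : ℝ → ℝ} (hconc : ConcaveOn ℝ (Ici 0) h) (hmono : MonotoneOn h (Ici 0))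
    (h0 : h 0 = 0) {A b y : ℝ} (hb : 0 ≤ b) (hbA : b ≤ A) (hy : 0 ≤ y) :
    b * h y ≤ (1 + A) * h (b * y) := by
  have hA : 0 < 1 + A := by linarith
  have hθ0 : 0 ≤ b / (1 + A) := by positivity
  have hθ1 : b / (1 + A) ≤ 1 := by rw [div_le_one hA]; linarith
  have h1 := hconc.2 (mem_Ici.2 hy) (mem_Ici.2 le_rfl) hθ0 (sub_nonneg.2 hθ1)
    (add_sub_cancel _ _)
  simp only [smul_eq_mul, h0, mul_zero, add_zero] at h1
  have h2 : h (b / (1 + A) * y) ≤ h (b * y) := by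
    refine hmono (mem_Ici.2 (by positivity)) (mem_Ici.2 (by positivity)) ?_
    exact mul_le_mul_of_nonneg_right (div_le_self hb (by linarith)) hy
  have h3 := mul_le_mul_of_nonneg_left (h1.trans h2) hA.le
  have e : (1 + A) * (b / (1 + A) * h y) = b * h y := by field_simp
  rwa [e] at h3


/-- The combined estimate (5.4.4): splitting into `|v| > 1` and `|v| ≤ 1` and
using Jensen's inequality for the concave majorant `h`. -/
theorem stmt_8 {Ω : Type*} [MeasurableSpace Ω] (μ : Measure Ω)
    (hμpos : 0 < μ Set.univ) (hμfin : μ Set.univ < ⊤)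
    (A : ℝ) (hA : 0 ≤ A)
    (a : Ω → ℝ) (ha_meas : Measurable a)
    (ha : ∀ᵐ x ∂μ, 0 ≤ a x ∧ a x ≤ A)
    (k K : ℝ) (hk : 0 < k) (hK : 0 < K)
    (g : ℝ → ℝ)
    (hsg : ∀ s : ℝ, 0 ≤ s * g s)
    (hlow : ∀ s : ℝ, 1 ≤ |s| → k * |s| ≤ |g s|)
    (hup : ∀ s : ℝ, 1 ≤ |s| → |g s| ≤ K * |s|)
    (h : ℝ → ℝ)
    (hconc : ConcaveOn ℝ (Ici 0) h)
    (hmono : MonotoneOn h (Ici 0))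
    (h0 : h 0 = 0)
    (hnn : ∀ x ≥ (0 : ℝ), 0 ≤ h x)
    (hdom : ∀ s : ℝ, |s| ≤ 1 → s ^ 2 + g s ^ 2 ≤ h (s * g s))
    (v : Ω → ℝ) (hv : Measurable v)
    (hint1 : Integrable (fun x => a x * (g (v x) ^ 2 + v x ^ 2)) μ)
    (hint2 : Integrable (fun x => a x * (g (v x) * v x)) μ) :
    ∫ x, a x * (g (v x) ^ 2 + v x ^ 2) ∂μ ≤
      (k⁻¹ + K) * ∫ x, a x * (g (v x) * v x) ∂μ +
        (1 + A) * (μ Set.univ).toReal *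
          h ((μ Set.univ).toReal⁻¹ * ∫ x, a x * (g (v x) * v x) ∂μ) := by
  have : IsFiniteMeasure μ := ⟨hμfin⟩
  have hM : 0 < (μ Set.univ).toReal := ENNReal.toReal_pos hμpos.ne' hμfin.ne
  have hw : ∀ᵐ x ∂μ, 0 ≤ a x * (g (v x) * v x) := by
    filter_upwards [ha] with x hx
    exact mul_nonneg hx.1 (by linarith [hsg (v x)])
  have hpt : ∀ᵐ x ∂μ, a x * (g (v x) ^ 2 + v x ^ 2) ≤
      (k⁻¹ + K) * (a x * (g (v x) * v x)) + (1 + A) * h (a x * (g (v x) * v x)) := by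
    filter_upwards [ha, hw] with x hx hwx
    have hs : 0 ≤ g (v x) * v x := by linarith [hsg (v x)]
    rcases le_total 1 |v x| with hv1 | hv1
    · have h1 := mul_le_mul_of_nonneg_left
        (growth_bound hk (hsg (v x)) (hlow _ hv1) (hup _ hv1)) hx.1
      have h2 : 0 ≤ (1 + A) * h (a x * (g (v x) * v x)) :=
        mul_nonneg (by linarith) (hnn _ hwx)
      linarith
    · have h1 := hdom _ hv1
      rw [mul_comm (v x)] at h1
      have h2 := mul_concave_le hconc hmono h0 hx.1 hx.2 hs
      have h3 := mul_le_mul_of_nonneg_left h1 hx.1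
      have h4 : 0 ≤ (k⁻¹ + K) * (a x * (g (v x) * v x)) := by positivity
      linarith
  set w : Ω → ℝ := fun x => a x * (g (v x) * v x) with hwdef
  set M := (μ Set.univ).toReal with hMdef
  have hI : 0 ≤ ∫ x, w x ∂μ := integral_nonneg_of_ae hw
  rcases hI.eq_or_lt with hI0 | hIpos
  · have hw0 : w =ᵐ[μ] 0 := (integral_eq_zero_iff_of_nonneg_ae hw hint2).1 hI0.symm
    rw [← hI0, mul_zero, mul_zero, h0, mul_zero, add_zero]
    refine integral_nonpos_of_ae ?_
    filter_upwards [hpt, hw0] with x hx hx0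
    have hx0' : a x * (g (v x) * v x) = 0 := hx0
    simpa [hx0', h0] using hx
  · set m := M⁻¹ * ∫ x, w x ∂μ with hm
    have hMm : M * m = ∫ x, w x ∂μ := by rw [hm, mul_inv_cancel_left₀ hM.ne']
    obtain ⟨c, hc⟩ := exists_supporting_line hconc (m := m) (by positivity)
    have hle : ∀ᵐ x ∂μ, a x * (g (v x) ^ 2 + v x ^ 2) ≤
        (k⁻¹ + K + (1 + A) * c) * w x + (1 + A) * (h m - c * m) := by
      filter_upwards [hpt, hw] with x hx hwx
      have h1 := mul_le_mul_of_nonneg_left (hc _ hwx) (show 0 ≤ 1 + A by linarith)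
      simp only [hwdef]
      linarith
    have hmul : Integrable (fun x => (k⁻¹ + K + (1 + A) * c) * w x) μ := hint2.const_mul _
    refine (integral_mono_ae hint1 (hmul.add (integrable_const _)) hle).trans_eq ?_
    rw [integral_add' hmul (integrable_const _), integral_const_mul, integral_const,
      smul_eq_mul, measureReal_def, ← hMdef, ← hMm]
    ring
end
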